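/- Let N ≥ 3 be an integer and define B_m = Σ_{α=1}^{N−1} η_α (η_α + 1)(η_α − 1)^{m−1} for integers m ≥ 0, where for m = 0 the factor (η_α − 1)^{−1} means 1/(η_α − 1) (well-defined since η_α ≠ 1 for 1 ≤ α ≤ N−1). Then B_0 = N − 2, B_1 = −2, B_m = 0 for every integer m with 2 ≤ m ≤ N−2, and B_{N−1} = N. -/

import Mathlib

open Finset

/-- The roots of unity `η_α = exp(2πiα/N)`. -/
noncomputable def η (N α : ℕ) : ℂ :=
  Complex.exp (2 * Real.pi * Complex.I * α / N)

/-- `B_m = Σ_{α=1}^{N−1} η_α (η_α + 1)(η_α − 1)^{m−1}`, where the exponent `m − 1`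
is taken in `ℤ`, so that for `m = 0` the factor is `1/(η_α − 1)`. -/
noncomputable def B (N m : ℕ) : ℂ :=
  ∑ α ∈ Finset.Icc 1 (N - 1), η N α * (η N α + 1) * (η N α - 1) ^ ((m : ℤ) - 1)

lemma eta_pow (N α : ℕ) : η N α = (η N 1) ^ α := by
  unfold η
  rw [← Complex.exp_nat_mul]
  congr 1
  push_cast
  ring

lemma eta_prim (N : ℕ) (hN : 3 ≤ N) : IsPrimitiveRoot (η N 1) N := by
  have h := Complex.isPrimitiveRoot_exp N (by omega)
  unfold η
  simpa using h

lemma sum_pow_eta (N : ℕ) (hN : 3 ≤ N) (k : ℕ) (h0 : 0 < k) (hk : k < N) :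
    ∑ α ∈ Finset.range N, (η N α) ^ k = 0 := by
  have hp := eta_prim N hN
  have h1 : (η N 1) ^ k ≠ 1 := hp.pow_ne_one_of_pos_of_lt (by omega) hk
  have h2 : ∑ α ∈ Finset.range N, (η N α) ^ k = ∑ α ∈ Finset.range N, ((η N 1) ^ k) ^ α := by
    refine Finset.sum_congr rfl fun α _ => ?_
    rw [eta_pow, ← pow_mul, ← pow_mul, mul_comm]
  rw [h2, geom_sum_eq h1, ← pow_mul, mul_comm, pow_mul, hp.pow_eq_one]
  simp

lemma sum_poly (N : ℕ) (hN : 3 ≤ N) (p : Polynomial ℂ) (h0 : p.coeff 0 = 0)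
    (hd : p.degree < N) : ∑ α ∈ Finset.range N, p.eval (η N α) = 0 := by
  have h : ∀ x : ℂ, p.eval x = ∑ k ∈ Finset.range N, p.coeff k * x ^ k := by
    intro x
    by_cases hp : p = 0
    · simp [hp]
    · exact Polynomial.eval_eq_sum_range' ((Polynomial.natDegree_lt_iff_degree_lt hp).2 hd) x
  simp_rw [h]
  rw [Finset.sum_comm]
  refine Finset.sum_eq_zero fun k hk => ?_
  rw [← Finset.mul_sum]
  rcases Nat.eq_zero_or_pos k with rfl | hk0
  · simp [h0]
  · rw [sum_pow_eta N hN k hk0 (Finset.mem_range.1 hk), mul_zero]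

lemma sum_split (N : ℕ) (hN : 3 ≤ N) (f : ℕ → ℂ) :
    ∑ α ∈ Finset.range N, f α = f 0 + ∑ α ∈ Finset.Icc 1 (N - 1), f α := by
  have h : Finset.range N = insert 0 (Finset.Icc 1 (N - 1)) := by
    ext a
    simp only [Finset.mem_range, Finset.mem_insert, Finset.mem_Icc]
    omega
  rw [h, Finset.sum_insert (by simp)]

lemma eta_zero (N : ℕ) : η N 0 = 1 := by simp [η]

/-- The polynomial `X (X+1) (X-1)^n`. -/
noncomputable def polyB (n : ℕ) : Polynomial ℂ :=
  Polynomial.X * (Polynomial.X + Polynomial.C 1) * (Polynomial.X - Polynomial.C 1) ^ n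

lemma polyB_monic (n : ℕ) : (polyB n).Monic :=
  (Polynomial.monic_X.mul (Polynomial.monic_X_add_C 1)).mul ((Polynomial.monic_X_sub_C 1).pow n)

lemma polyB_natDegree (n : ℕ) : (polyB n).natDegree = n + 2 := by
  unfold polyB
  rw [(Polynomial.monic_X.mul (Polynomial.monic_X_add_C 1)).natDegree_mul
    ((Polynomial.monic_X_sub_C 1).pow n), Polynomial.monic_X.natDegree_mul
    (Polynomial.monic_X_add_C 1), (Polynomial.monic_X_sub_C 1).natDegree_pow,
    Polynomial.natDegree_X_sub_C, Polynomial.natDegree_X_add_C, Polynomial.natDegree_X]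
  omega

lemma polyB_coeff (n : ℕ) : (polyB n).coeff 0 = 0 := by
  simp [polyB, Polynomial.mul_coeff_zero]

lemma B_eq (N : ℕ) (hN : 3 ≤ N) (n : ℕ) :
    B N (n + 2) = ∑ α ∈ Finset.range N, (polyB (n + 1)).eval (η N α) := by
  rw [sum_split N hN, eta_zero]
  have : ((n + 2 : ℕ) : ℤ) - 1 = ((n + 1 : ℕ) : ℤ) := by push_cast; ring
  unfold B
  rw [this]
  simp only [zpow_natCast]
  simp [polyB]

lemma B_zero (N : ℕ) (hN : 3 ≤ N) (hs : ∑ α ∈ Finset.Icc 1 (N - 1), η N α = -1) :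
    B N 0 = (N : ℂ) - 2 := by
  have hp := eta_prim N hN
  have hmul : ∀ α ∈ Finset.Icc 1 (N - 1), η N α * η N (N - α) = 1 := by
    intro α ha
    rw [Finset.mem_Icc] at ha
    rw [eta_pow N α, eta_pow N (N - α), ← pow_add, Nat.add_sub_cancel' (by omega), hp.pow_eq_one]
  have hrefl : ∀ f : ℕ → ℂ, ∑ α ∈ Finset.Icc 1 (N - 1), f (N - α)
      = ∑ α ∈ Finset.Icc 1 (N - 1), f α := by
    intro f
    refine Finset.sum_nbij' (fun a => N - a) (fun a => N - a) ?_ ?_ ?_ ?_ ?_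
    all_goals
      intro a ha
      simp only [Finset.mem_Icc] at *
    all_goals first | rfl | omega
  have key : B N 0 + B N 0 = ∑ α ∈ Finset.Icc 1 (N - 1), (η N α + η N (N - α) + 2) := by
    unfold B
    nth_rewrite 1 [← hrefl]
    rw [← Finset.sum_add_distrib]
    refine Finset.sum_congr rfl fun α ha => ?_
    have h1 := hmul α ha
    rw [Finset.mem_Icc] at ha
    have hne : η N α ≠ 1 := by
      rw [eta_pow]
      exact hp.pow_ne_one_of_pos_of_lt (by omega) (by omega)
    have hne' : η N (N - α) ≠ 1 := by
      rw [eta_pow]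
      exact hp.pow_ne_one_of_pos_of_lt (by omega) (by omega)
    have e : ((0 : ℕ) : ℤ) - 1 = -1 := by norm_num
    rw [e, zpow_neg_one, zpow_neg_one]
    generalize η N α = x at *
    generalize η N (N - α) = y at *
    have hx := sub_ne_zero.2 hne
    have hy := sub_ne_zero.2 hne'
    field_simp
    linear_combination 2 * h1
  rw [Finset.sum_add_distrib, Finset.sum_add_distrib, hrefl (fun a => η N a), hs] at key
  simp only [Finset.sum_const, Nat.card_Icc, nsmul_eq_mul] at key
  rw [show N - 1 + 1 - 1 = N - 1 by omega, Nat.cast_sub (by omega)] at key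
  push_cast at key
  linear_combination key / 2

theorem stmt15 (N : ℕ) (hN : 3 ≤ N) :
    B N 0 = (N : ℂ) - 2 ∧ B N 1 = -2 ∧
      (∀ m : ℕ, 2 ≤ m → m ≤ N - 2 → B N m = 0) ∧ B N (N - 1) = (N : ℂ) := by
  have hs1 : ∑ α ∈ Finset.Icc 1 (N - 1), η N α = -1 := by
    have h := sum_pow_eta N hN 1 (by omega) (by omega)
    rw [sum_split N hN, eta_zero] at h
    simp only [pow_one] at h
    linear_combination h
  have hs2 : ∑ α ∈ Finset.Icc 1 (N - 1), η N α ^ 2 = -1 := by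
    have h := sum_pow_eta N hN 2 (by omega) (by omega)
    rw [sum_split N hN, eta_zero] at h
    linear_combination h
  refine ⟨B_zero N hN hs1, ?_, ?_, ?_⟩
  · have : B N 1 = ∑ α ∈ Finset.Icc 1 (N - 1), (η N α ^ 2 + η N α) := by
      unfold B
      refine Finset.sum_congr rfl fun α _ => ?_
      simp
      ring
    rw [this, Finset.sum_add_distrib, hs1, hs2]
    norm_num
  · intro m h2 hm
    obtain ⟨n, rfl⟩ := Nat.exists_eq_add_of_le' h2
    rw [B_eq N hN]
    refine sum_poly N hN _ (polyB_coeff _) ?_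
    rw [Polynomial.degree_eq_natDegree (polyB_monic _).ne_zero, polyB_natDegree]
    exact_mod_cast (by omega : n + 1 + 2 < N)
  · obtain ⟨n, rfl⟩ := Nat.exists_eq_add_of_le' hN
    rw [show n + 3 - 1 = n + 2 by omega, B_eq _ hN]
    have hdeg : (polyB (n + 1)).degree = ((n + 3 : ℕ) : WithBot ℕ) := by
      rw [Polynomial.degree_eq_natDegree (polyB_monic _).ne_zero, polyB_natDegree]
    have h := sum_poly (n + 3) hN (polyB (n + 1) - Polynomial.X ^ (n + 3))
      (by simp [polyB_coeff]) (by
        rw [← hdeg]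
        refine Polynomial.degree_sub_lt ?_ (polyB_monic _).ne_zero ?_
        · rw [hdeg, Polynomial.degree_X_pow]
        · rw [(polyB_monic _).leadingCoeff, (Polynomial.monic_X_pow _).leadingCoeff])
    simp only [Polynomial.eval_sub, Polynomial.eval_pow, Polynomial.eval_X,
      Finset.sum_sub_distrib] at h
    have h1 : ∀ α, η (n + 3) α ^ (n + 3) = 1 := by
      intro α
      rw [eta_pow, ← pow_mul, mul_comm, pow_mul, (eta_prim _ hN).pow_eq_one, one_pow]
    simp only [h1] at h
    simp only [Finset.sum_const, Finset.card_range, nsmul_eq_mul, mul_one] at h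
    exact sub_eq_zero.1 h
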